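/- For every integer n ≥ 1, set w := x^{n+1}y^n, R := x·(w+1)^n and G := −(1/(n+1))·x²y·(w+1)^{n−1}·(w+n+1) in K[x,y]. Then R is (n,−n−1)-homogeneous and not a monomial, st_{n,−n−1}(R) = (1,0), en_{n,−n−1}(R) = (n²+n+1, n²), and [G,R] = R². Consequently the data C_0 = (1,0), C_1 = (n²+n+1,n²), R_1 = R, (ρ_1,σ_1) = (n,−n−1) form an admissible chain of length 1, so (a′,b′) := (n²+n+1, n²) is a possible A0′, and it satisfies b′ = (a′ − b′ − 1)². -/

import Mathlib

/-!
Both `R` and `G` have the form `x^a y^b f(w)` with `w = x^(n+1) y^n` of weight `0`. The exponents of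
such a polynomial lie on a line in the direction `(n+1, n)` and are in bijection with the support of
`f`, so homogeneity and the two end points are read off from `f = (t+1)^n`. Since `x ∂ₓ` and `y ∂_y`
act on `x^a y^b f(w)` through `f ↦ a f + (n+1) t df/dt` and `f ↦ b f + n t df/dt`, the equation `[G,
R] = R²` reduces to an identity between univariate polynomials.
-/

open MvPolynomial

noncomputable section

variable {K : Type*} [Field K] [CharZero K]

/-- The support of `P` as a set of pairs `(i,j)` of exponents of `x^i y^j`. -/
def Supp (P : MvPolynomial (Fin 2) K) : Set (ℕ × ℕ) :=
  {p | MvPolynomial.coeff (Finsupp.single 0 p.1 + Finsupp.single 1 p.2) P ≠ 0}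

/-- The Jacobian bracket `[P,Q] = ∂ₓP ∂_yQ − ∂ₓQ ∂_yP`. -/
def Jb (P Q : MvPolynomial (Fin 2) K) : MvPolynomial (Fin 2) K :=
  pderiv 0 P * pderiv 1 Q - pderiv 0 Q * pderiv 1 P

/-- The `(ρ,σ)`-degree `v_{ρ,σ}(P)` (the maximum of `ρi+σj` on the support). -/
def wdeg (ρ σ : ℤ) (P : MvPolynomial (Fin 2) K) : ℤ :=
  sSup {d : ℤ | ∃ p ∈ Supp P, d = ρ * (p.1 : ℤ) + σ * (p.2 : ℤ)}

/-- The support of the `(ρ,σ)`-leading form of `P`. -/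
def LeadSupp (ρ σ : ℤ) (P : MvPolynomial (Fin 2) K) : Set (ℕ × ℕ) :=
  {p | p ∈ Supp P ∧ ρ * (p.1 : ℤ) + σ * (p.2 : ℤ) = wdeg ρ σ P}

/-- `P` is `(ρ,σ)`-homogeneous. -/
def IsHomog (ρ σ : ℤ) (P : MvPolynomial (Fin 2) K) : Prop :=
  ∀ p ∈ Supp P, ∀ q ∈ Supp P,
    ρ * (p.1 : ℤ) + σ * (p.2 : ℤ) = ρ * (q.1 : ℤ) + σ * (q.2 : ℤ)

/-- `P` is a monomial: its support has at most one point. -/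
def IsMonomial (P : MvPolynomial (Fin 2) K) : Prop := (Supp P).Subsingleton

/-- `e` is the point `en_{ρ,σ}(P)`: the point of the support of the leading form
with largest second coordinate. -/
def IsEn (ρ σ : ℤ) (P : MvPolynomial (Fin 2) K) (e : ℕ × ℕ) : Prop :=
  e ∈ LeadSupp ρ σ P ∧ ∀ q ∈ LeadSupp ρ σ P, q.2 ≤ e.2

/-- `e` is the point `st_{ρ,σ}(P)`: the point of the support of the leading form
with smallest second coordinate. -/
def IsSt (ρ σ : ℤ) (P : MvPolynomial (Fin 2) K) (e : ℕ × ℕ) : Prop :=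
  e ∈ LeadSupp ρ σ P ∧ ∀ q ∈ LeadSupp ρ σ P, e.2 ≤ q.2

/-- An admissible chain of length `k`: points `C 0, …, C k`, polynomials
`Rp 1, …, Rp k` and directions `dir 1, …, dir k` satisfying conditions
(i)–(viii) of Definition "cadena admisible". -/
structure AdmChain (K : Type*) [Field K] [CharZero K] (k : ℕ) where
  C : ℕ → ℕ × ℕ
  Rp : ℕ → MvPolynomial (Fin 2) K
  dir : ℕ → ℤ × ℤ
  hdir : ∀ j, 1 ≤ j → j ≤ k →
    Int.gcd (dir j).1 (dir j).2 = 1 ∧ 0 < (dir j).1 ∧ (dir j).1 + (dir j).2 < 0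
  hC0 : ∃ l : ℕ, 1 ≤ l ∧ C 0 = (l, 0)
  hincr : ∀ j, 2 ≤ j → j ≤ k →
    0 < (dir (j - 1)).1 * (dir j).2 - (dir (j - 1)).2 * (dir j).1
  hhom : ∀ j, 1 ≤ j → j ≤ k → IsHomog (dir j).1 (dir j).2 (Rp j)
  hmono : ∀ j, 1 ≤ j → j ≤ k → ¬ IsMonomial (Rp j)
  hst : ∀ j, 1 ≤ j → j ≤ k → IsSt (dir j).1 (dir j).2 (Rp j) (C (j - 1))
  hen : ∀ j, 1 ≤ j → j ≤ k → IsEn (dir j).1 (dir j).2 (Rp j) (C j)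
  hdiag : ∀ j, 1 ≤ j → j ≤ k → (C j).2 < (C j).1
  hval : ∀ j, 1 ≤ j → j ≤ k →
    (dir j).1 ≤ (dir j).1 * ((C j).1 : ℤ) + (dir j).2 * ((C j).2 : ℤ)
  hG : ∀ j, 1 ≤ j → j ≤ k → ∃ (G : MvPolynomial (Fin 2) K) (i : ℕ), 1 ≤ i ∧
    IsHomog (dir j).1 (dir j).2 G ∧ Jb G (Rp j) = (Rp j) ^ i

/-- A point of `ℕ × ℕ` is a possible `A₀′` if it is the end point of some
admissible chain. -/
def PossibleA0 (K : Type*) [Field K] [CharZero K] (p : ℕ × ℕ) : Prop :=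
  ∃ (k : ℕ) (ch : AdmChain K k), ch.C k = p

section LeadingForms

variable {F : Type*} [Field F] {ρ σ : ℤ} {P : MvPolynomial (Fin 2) F}

theorem isHomog_of_forall_eq {d : ℤ}
    (h : ∀ p ∈ Supp P, ρ * (p.1 : ℤ) + σ * (p.2 : ℤ) = d) : IsHomog ρ σ P :=
  fun p hp q hq => (h p hp).trans (h q hq).symm

theorem IsHomog.wdeg_eq (h : IsHomog ρ σ P) {p : ℕ × ℕ} (hp : p ∈ Supp P) :
    wdeg ρ σ P = ρ * (p.1 : ℤ) + σ * (p.2 : ℤ) := by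
  have degrees_eq : {d : ℤ | ∃ q ∈ Supp P, d = ρ * (q.1 : ℤ) + σ * (q.2 : ℤ)} =
      {ρ * (p.1 : ℤ) + σ * (p.2 : ℤ)} :=
    Set.eq_singleton_iff_unique_mem.2
      ⟨⟨p, hp, rfl⟩, fun _ ⟨q, hq, hd⟩ => hd.trans (h q hq p hp)⟩
  rw [wdeg, degrees_eq, csSup_singleton]

theorem IsHomog.leadSupp_eq (h : IsHomog ρ σ P) : LeadSupp ρ σ P = Supp P :=
  Set.Subset.antisymm (fun _ hp => hp.1) fun _ hp => ⟨hp, (h.wdeg_eq hp).symm⟩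

theorem not_isMonomial_of_isSt_of_isEn {s e : ℕ × ℕ} (hs : IsSt ρ σ P s) (he : IsEn ρ σ P e)
    (hne : s ≠ e) : ¬ IsMonomial P :=
  fun h => hne (h hs.1.1 he.1.1)

end LeadingForms

section EdgePolynomials

variable {A : Type*} [CommSemiring A]

/-- The polynomial `x^{u₁} y^{u₂} f(x^{v₁} y^{v₂})`, whose exponents lie on the line through `u` in
the direction `v`: the general shape of a homogeneous polynomial. -/
def edgePoly (u v : ℕ × ℕ) (f : Polynomial A) : MvPolynomial (Fin 2) A :=
  X 0 ^ u.1 * X 1 ^ u.2 * Polynomial.aeval (X 0 ^ v.1 * X 1 ^ v.2) f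

theorem edgePoly_mul_edgePoly (u s v : ℕ × ℕ) (f g : Polynomial A) :
    edgePoly u v f * edgePoly s v g = edgePoly (u + s) v (f * g) := by
  simp only [edgePoly, map_mul, Prod.fst_add, Prod.snd_add]
  ring

theorem single_add_single_inj {p q : ℕ × ℕ} :
    (Finsupp.single (0 : Fin 2) p.1 + Finsupp.single 1 p.2 =
      Finsupp.single 0 q.1 + Finsupp.single 1 q.2) ↔ p = q := by
  refine ⟨fun h => Prod.ext ?_ ?_, fun h => h ▸ rfl⟩
  · simpa using DFunLike.congr_fun h 0
  · simpa using DFunLike.congr_fun h 1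

theorem edgePoly_eq_sum_monomial (u v : ℕ × ℕ) (f : Polynomial A) :
    edgePoly u v f = ∑ k ∈ f.support,
      monomial (Finsupp.single 0 (u + k • v).1 + Finsupp.single 1 (u + k • v).2) (f.coeff k) := by
  rw [edgePoly, Polynomial.aeval_def, Polynomial.eval₂_eq_sum, Polynomial.sum_def, Finset.mul_sum]
  refine Finset.sum_congr rfl fun k _ => ?_
  rw [monomial_add_single, ← zero_add (Finsupp.single _ _), monomial_add_single, ← C_apply,
    algebraMap_eq]
  simp only [Prod.fst_add, Prod.snd_add, Prod.smul_fst, Prod.smul_snd, smul_eq_mul]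
  ring

theorem coeff_edgePoly {v : ℕ × ℕ} (hv : v ≠ 0) (u : ℕ × ℕ) (f : Polynomial A) (k : ℕ) :
    coeff (Finsupp.single 0 (u + k • v).1 + Finsupp.single 1 (u + k • v).2) (edgePoly u v f) =
      f.coeff k := by
  have smul_eq_iff (j : ℕ) : j • v = k • v ↔ j = k :=
    (nsmul_left_strictMono (pos_iff_ne_zero.2 hv)).injective.eq_iff
  simp only [edgePoly_eq_sum_monomial, coeff_sum, coeff_monomial, single_add_single_inj,
    add_right_inj, smul_eq_iff, Finset.sum_ite_eq']
  exact ite_eq_left_iff.2 fun hk => (Polynomial.notMem_support_iff.1 hk).symm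

theorem mul_derivation_mul_aeval {S : Type*} [CommSemiring S] [Algebra A S] (D : Derivation A S S)
    {x m w : S} {a b : ℕ} (hm : x * D m = a • m) (hw : x * D w = b • w) (f : Polynomial A) :
    x * D (m * Polynomial.aeval w f) =
      m * Polynomial.aeval w (a • f + b • (Polynomial.X * f.derivative)) := by
  simp only [Derivation.leibniz, Derivation.map_aeval, smul_eq_mul, map_add, map_nsmul,
    map_mul, Polynomial.aeval_X]
  calc
    _ = m * (Polynomial.aeval w f.derivative * (x * D w)) + Polynomial.aeval w f * (x * D m) := by
      ring
    _ = _ := by rw [hm, hw]; simp only [nsmul_eq_mul]; ring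

theorem X_mul_pderiv_X_pow_mul_X_pow (u : ℕ × ℕ) (i : Fin 2) :
    X i * pderiv i (X 0 ^ u.1 * X 1 ^ u.2 : MvPolynomial (Fin 2) A) =
      ![u.1, u.2] i • (X 0 ^ u.1 * X 1 ^ u.2) := by
  have hmonomial : (X 0 ^ u.1 * X 1 ^ u.2 : MvPolynomial (Fin 2) A) =
      monomial (Finsupp.single 0 u.1 + Finsupp.single 1 u.2) 1 := by
    rw [monomial_add_single, ← X_pow_eq_monomial]
  rw [hmonomial, X_mul_pderiv_monomial]
  fin_cases i <;> simp

theorem X_mul_pderiv_edgePoly (u v : ℕ × ℕ) (f : Polynomial A) (i : Fin 2) :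
    X i * pderiv i (edgePoly u v f) =
      edgePoly u v (![u.1, u.2] i • f + ![v.1, v.2] i • (Polynomial.X * f.derivative)) :=
  mul_derivation_mul_aeval _ (X_mul_pderiv_X_pow_mul_X_pow u i) (X_mul_pderiv_X_pow_mul_X_pow v i) f

end EdgePolynomials

section EdgeSupport

variable {F : Type*} [Field F] {ρ σ : ℤ} {v : ℕ × ℕ} {f : Polynomial F}

theorem Supp_edgePoly_subset (u v : ℕ × ℕ) (f : Polynomial F) :
    Supp (edgePoly u v f) ⊆ (fun k : ℕ => u + k • v) '' f.support := by
  intro p hp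
  rw [Supp, Set.mem_ofPred_eq, edgePoly_eq_sum_monomial, coeff_sum] at hp
  obtain ⟨k, hk, hne⟩ := Finset.exists_ne_zero_of_sum_ne_zero hp
  rw [coeff_monomial, ite_ne_right_iff, single_add_single_inj] at hne
  exact ⟨k, hk, hne.1⟩

theorem Supp_edgePoly (hv : v ≠ 0) (u : ℕ × ℕ) (f : Polynomial F) :
    Supp (edgePoly u v f) = (fun k : ℕ => u + k • v) '' f.support := by
  refine (Supp_edgePoly_subset u v f).antisymm ?_
  rintro _ ⟨k, hk, rfl⟩
  rw [Supp, Set.mem_ofPred_eq, coeff_edgePoly hv]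
  exact Polynomial.mem_support_iff.1 hk

theorem isHomog_edgePoly (hweight : ρ * v.1 + σ * v.2 = 0) (u : ℕ × ℕ) (f : Polynomial F) :
    IsHomog ρ σ (edgePoly u v f) := by
  refine isHomog_of_forall_eq (d := ρ * u.1 + σ * u.2) fun p hp => ?_
  obtain ⟨k, -, rfl⟩ := Supp_edgePoly_subset u v f hp
  simp only [Prod.fst_add, Prod.snd_add, Prod.smul_fst, Prod.smul_snd, smul_eq_mul]
  push_cast
  linear_combination (k : ℤ) * hweight

theorem leadSupp_edgePoly (hv : v ≠ 0) (hweight : ρ * v.1 + σ * v.2 = 0) (u : ℕ × ℕ)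
    (f : Polynomial F) :
    LeadSupp ρ σ (edgePoly u v f) = (fun k : ℕ => u + k • v) '' f.support := by
  rw [(isHomog_edgePoly hweight u f).leadSupp_eq, Supp_edgePoly hv]

theorem isSt_edgePoly (hv : v ≠ 0) (hweight : ρ * v.1 + σ * v.2 = 0) (u : ℕ × ℕ) (hf : f ≠ 0) :
    IsSt ρ σ (edgePoly u v f) (u + f.natTrailingDegree • v) := by
  rw [IsSt, leadSupp_edgePoly hv hweight]
  refine ⟨⟨_, Polynomial.natTrailingDegree_mem_support_of_nonzero hf, rfl⟩, ?_⟩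
  rintro _ ⟨k, hk, rfl⟩
  have hle : f.natTrailingDegree ≤ k := Polynomial.natTrailingDegree_le_of_mem_supp k hk
  simp only [Prod.snd_add, Prod.smul_snd, smul_eq_mul]
  gcongr

theorem isEn_edgePoly (hv : v ≠ 0) (hweight : ρ * v.1 + σ * v.2 = 0) (u : ℕ × ℕ) (hf : f ≠ 0) :
    IsEn ρ σ (edgePoly u v f) (u + f.natDegree • v) := by
  rw [IsEn, leadSupp_edgePoly hv hweight]
  refine ⟨⟨_, Polynomial.natDegree_mem_support_of_nonzero hf, rfl⟩, ?_⟩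
  rintro _ ⟨k, hk, rfl⟩
  have hle : k ≤ f.natDegree := Polynomial.le_natDegree_of_mem_supp k hk
  simp only [Prod.snd_add, Prod.smul_snd, smul_eq_mul]
  gcongr

theorem isSt_edgePoly_X_add_one_pow (hv : v ≠ 0) (hweight : ρ * v.1 + σ * v.2 = 0) (u : ℕ × ℕ)
    (n : ℕ) : IsSt ρ σ (edgePoly u v ((Polynomial.X + 1 : Polynomial F) ^ n)) u := by
  have hne : (Polynomial.X + 1 : Polynomial F) ^ n ≠ 0 :=
    ((Polynomial.monic_X_add_C 1).pow n).ne_zero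
  have hcoeff : ((Polynomial.X + 1 : Polynomial F) ^ n).coeff 0 ≠ 0 := by
    simp [Polynomial.coeff_zero_eq_eval_zero]
  simpa [Polynomial.natTrailingDegree_eq_zero.2 (.inr hcoeff)] using isSt_edgePoly hv hweight u hne

theorem isEn_edgePoly_X_add_one_pow (hv : v ≠ 0) (hweight : ρ * v.1 + σ * v.2 = 0) (u : ℕ × ℕ)
    (n : ℕ) : IsEn ρ σ (edgePoly u v ((Polynomial.X + 1 : Polynomial F) ^ n)) (u + n • v) := by
  have hne : (Polynomial.X + 1 : Polynomial F) ^ n ≠ 0 :=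
    ((Polynomial.monic_X_add_C 1).pow n).ne_zero
  have hdeg : ((Polynomial.X + 1 : Polynomial F) ^ n).natDegree = n := by
    rw [Polynomial.natDegree_pow, ← Polynomial.C_1, Polynomial.natDegree_X_add_C, mul_one]
  simpa [hdeg] using isEn_edgePoly hv hweight u hne

end EdgeSupport

section Bracket

variable {F : Type*} [Field F]

/-- The determinant `u × v` of two exponent vectors: `[x^u, x^v] = (u × v) x^{u+v-(1,1)}`. -/
def cross (u v : ℕ × ℕ) : ℤ :=
  u.1 * v.2 - v.1 * u.2

theorem X_mul_X_mul_Jb_edgePoly (u s v : ℕ × ℕ) (f g : Polynomial F) :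
    X 0 * X 1 * Jb (edgePoly u v f) (edgePoly s v g) =
      edgePoly (u + s) v (cross u s • (f * g) +
        Polynomial.X * (cross u v • (f * g.derivative) + cross v s • (f.derivative * g))) := by
  calc
    _ = X 0 * pderiv 0 (edgePoly u v f) * (X 1 * pderiv 1 (edgePoly s v g)) -
          X 0 * pderiv 0 (edgePoly s v g) * (X 1 * pderiv 1 (edgePoly u v f)) := by
      rw [Jb]; ring
    _ = edgePoly (u + s) v ((u.1 • f + v.1 • (Polynomial.X * f.derivative)) *
            (s.2 • g + v.2 • (Polynomial.X * g.derivative)) -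
          (s.1 • g + v.1 • (Polynomial.X * g.derivative)) *
            (u.2 • f + v.2 • (Polynomial.X * f.derivative))) := by
      simp only [X_mul_pderiv_edgePoly, edgePoly_mul_edgePoly, add_comm s u]
      simp [edgePoly, mul_sub]
    _ = _ := by
      congr 1
      simp only [cross, nsmul_eq_mul, zsmul_eq_mul]
      push_cast
      ring

theorem Jb_edgePoly_eq_edgePoly {u s t v : ℕ × ℕ} {f g h : Polynomial F} (hexp : u + s = (1, 1) + t)
    (hode : cross u s • (f * g) +
      Polynomial.X * (cross u v • (f * g.derivative) + cross v s • (f.derivative * g)) = h) :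
    Jb (edgePoly u v f) (edgePoly s v g) = edgePoly t v h := by
  have hXX : (X 0 * X 1 : MvPolynomial (Fin 2) F) = edgePoly (1, 1) v 1 := by simp [edgePoly]
  refine mul_left_cancel₀ (mul_ne_zero (X_ne_zero 0) (X_ne_zero 1)) ?_
  rw [X_mul_X_mul_Jb_edgePoly, hode, hexp, hXX, edgePoly_mul_edgePoly, one_mul]

end Bracket

section QuadraticCorner

theorem derivative_pow_mul_self {A : Type*} [CommSemiring A] (p : Polynomial A) (k : ℕ) :
    (p ^ k).derivative * p = (k : Polynomial A) * p ^ k * p.derivative := by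
  cases k with
  | zero => simp
  | succ k =>
    simp only [Polynomial.derivative_pow_succ, map_add, map_natCast, map_one, Nat.cast_succ]
    ring

theorem quadratic_bracket_ode {A : Type*} [CommRing A] {n : ℕ} (hn : 1 ≤ n) :
    let f : Polynomial A := (Polynomial.X + 1) ^ (n - 1) * (Polynomial.X + (n + 1 : Polynomial A))
    let g : Polynomial A := (Polynomial.X + 1) ^ n
    Polynomial.X * (((n : Polynomial A) - 1) * (f * g.derivative) -
      (n : Polynomial A) * (f.derivative * g)) - f * g = -((n : Polynomial A) + 1) * g ^ 2 := by
  intro f g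
  have hg_eq : g = (Polynomial.X + 1) ^ (n - 1) * (Polynomial.X + 1) :=
    (pow_sub_one_mul (Nat.one_le_iff_ne_zero.1 hn) _).symm
  have hg : g.derivative = (n : Polynomial A) * (Polynomial.X + 1) ^ (n - 1) := by
    simp [g, Polynomial.derivative_pow]
  have hf : f.derivative * (Polynomial.X + 1) = (Polynomial.X + 1) ^ (n - 1) *
      (((n : Polynomial A) - 1) * (Polynomial.X + (n + 1 : Polynomial A)) +
        (Polynomial.X + 1)) := by
    have hpow : ((Polynomial.X + 1) ^ (n - 1)).derivative * (Polynomial.X + 1) =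
        ((n : Polynomial A) - 1) * (Polynomial.X + 1) ^ (n - 1) := by
      simp [derivative_pow_mul_self, Nat.cast_pred hn]
    have hf_derivative : f.derivative = ((Polynomial.X + 1) ^ (n - 1)).derivative *
        (Polynomial.X + (n + 1 : Polynomial A)) + (Polynomial.X + 1) ^ (n - 1) := by
      simp [f]
    linear_combination (Polynomial.X + 1) * hf_derivative +
      (Polynomial.X + (n + 1 : Polynomial A)) * hpow
  rw [hg, hg_eq]
  linear_combination
    -(n : Polynomial A) * Polynomial.X * (Polynomial.X + 1) ^ (n - 1) * hf

/-- The univariate polynomial `f` for which `[x² y f(w), R] = R²`, where `R = x (w + 1)^n` and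
`w = x^(n+1) y^n`. At `n = 0`, where `n - 1` truncates, it has no such meaning. -/
def bracketCofactor (F : Type*) [Field F] (n : ℕ) : Polynomial F :=
  Polynomial.C (-((n : F) + 1)⁻¹) *
    ((Polynomial.X + 1) ^ (n - 1) * (Polynomial.X + (n + 1 : Polynomial F)))

theorem edgePoly_bracketCofactor {F : Type*} [Field F] (n : ℕ) (u v : ℕ × ℕ) :
    edgePoly u v (bracketCofactor F n) =
      -(C (((n : F) + 1)⁻¹) * (X 0 ^ u.1 * X 1 ^ u.2) * (X 0 ^ v.1 * X 1 ^ v.2 + 1) ^ (n - 1) *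
        (X 0 ^ v.1 * X 1 ^ v.2 + ((n : MvPolynomial (Fin 2) F) + 1))) := by
  simp only [edgePoly, bracketCofactor, map_mul, map_add, map_pow, map_neg, map_one, map_natCast,
    Polynomial.aeval_C, Polynomial.aeval_X, algebraMap_eq]
  ring

theorem Jb_edgePoly_bracketCofactor {F : Type*} [Field F] [CharZero F] {n : ℕ} (hn : 1 ≤ n) :
    Jb (edgePoly (2, 1) (n + 1, n) (bracketCofactor F n))
      (edgePoly (1, 0) (n + 1, n) ((Polynomial.X + 1) ^ n)) =
        edgePoly (1, 0) (n + 1, n) ((Polynomial.X + 1) ^ n) ^ 2 := by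
  have hscale : Polynomial.C (-((n : F) + 1)⁻¹) * -((n : Polynomial F) + 1) = 1 := by
    have hne : (n : F) + 1 ≠ 0 := n.cast_add_one_ne_zero
    rw [← Polynomial.C_eq_natCast, ← Polynomial.C_1, ← Polynomial.C_add, ← Polynomial.C_neg,
      ← Polynomial.C_mul, neg_mul_neg, inv_mul_cancel₀ hne]
  have hode := quadratic_bracket_ode (A := F) hn
  rw [sq, edgePoly_mul_edgePoly]
  refine Jb_edgePoly_eq_edgePoly rfl ?_
  simp only [bracketCofactor, cross, Polynomial.derivative_C_mul, zsmul_eq_mul]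
  push_cast
  linear_combination Polynomial.C (-((n : F) + 1)⁻¹) * hode + ((Polynomial.X + 1) ^ n) ^ 2 * hscale

end QuadraticCorner

theorem possibleA0_of_isSt_of_isEn {F : Type*} [Field F] [CharZero F] {ρ σ : ℤ}
    {R G : MvPolynomial (Fin 2) F} {l i : ℕ} {e : ℕ × ℕ} (hgcd : Int.gcd ρ σ = 1) (hρ : 0 < ρ)
    (hρσ : ρ + σ < 0) (hl : 1 ≤ l) (hR : IsHomog ρ σ R) (hst : IsSt ρ σ R (l, 0))
    (hen : IsEn ρ σ R e) (hne : (l, 0) ≠ e) (hdiag : e.2 < e.1) (hval : ρ ≤ ρ * e.1 + σ * e.2)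
    (hi : 1 ≤ i) (hG : IsHomog ρ σ G) (hGR : Jb G R = R ^ i) : PossibleA0 F e := by
  let points : ℕ → ℕ × ℕ := fun j => if j = 0 then (l, 0) else e
  have only_one {p : ℕ → Prop} (h : p 1) (j : ℕ) (h1 : 1 ≤ j) (h2 : j ≤ 1) : p j :=
    le_antisymm h1 h2 ▸ h
  exact ⟨1,
    { C := points
      Rp := fun _ => R
      dir := fun _ => (ρ, σ)
      hdir := fun _ _ _ => ⟨hgcd, hρ, hρσ⟩
      hC0 := ⟨l, hl, rfl⟩
      hincr := fun _ h2 h1 => absurd (h2.trans h1) (by decide)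
      hhom := fun _ _ _ => hR
      hmono := fun _ _ _ => not_isMonomial_of_isSt_of_isEn hst hen hne
      hst := only_one hst
      hen := only_one hen
      hdiag := only_one hdiag
      hval := only_one hval
      hG := fun _ _ _ => ⟨G, i, hi, hG, hGR⟩ }, rfl⟩

/-- Remark "caso 2": with `w = x^{n+1}y^n`, `R = x(w+1)^n` and
`G = −(1/(n+1))x²y(w+1)^{n−1}(w+n+1)`, the polynomial `R` is
`(n,−n−1)`-homogeneous, not a monomial, `st = (1,0)`, `en = (n²+n+1, n²)`,
`[G,R] = R²`; consequently `(n²+n+1, n²)` is a possible `A₀′`, and it attains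
equality `b' = (a'−b'−1)²`. -/
theorem stmt17 (K : Type*) [Field K] [CharZero K] (n : ℕ) (hn : 1 ≤ n) :
    let w : MvPolynomial (Fin 2) K := MvPolynomial.X 0 ^ (n + 1) * MvPolynomial.X 1 ^ n
    let R : MvPolynomial (Fin 2) K := MvPolynomial.X 0 * (w + 1) ^ n
    let G : MvPolynomial (Fin 2) K :=
      - (MvPolynomial.C (((n : K) + 1)⁻¹) * MvPolynomial.X 0 ^ 2 * MvPolynomial.X 1 *
          (w + 1) ^ (n - 1) * (w + ((n : MvPolynomial (Fin 2) K) + 1)))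
    IsHomog (n : ℤ) (-(n : ℤ) - 1) R ∧ ¬ IsMonomial R ∧
      IsSt (n : ℤ) (-(n : ℤ) - 1) R (1, 0) ∧
      IsEn (n : ℤ) (-(n : ℤ) - 1) R (n ^ 2 + n + 1, n ^ 2) ∧
      Jb G R = R ^ 2 ∧
      PossibleA0 K (n ^ 2 + n + 1, n ^ 2) ∧
      (n ^ 2 : ℤ) = (((n ^ 2 + n + 1 : ℕ) : ℤ) - ((n ^ 2 : ℕ) : ℤ) - 1) ^ 2 := by
  intro w R G
  have hR_eq : R = edgePoly (1, 0) (n + 1, n) ((Polynomial.X + 1) ^ n) := by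
    simp [R, w, edgePoly]
  have hG_eq : G = edgePoly (2, 1) (n + 1, n) (bracketCofactor K n) := by
    simp only [G, w, edgePoly_bracketCofactor, pow_one, mul_assoc]
  have hv : (n + 1, n) ≠ (0 : ℕ × ℕ) := by simp
  have hweight : (n : ℤ) * (n + 1 : ℕ) + (-(n : ℤ) - 1) * n = 0 := by push_cast; ring
  have hend : (1, 0) + n • (n + 1, n) = (n ^ 2 + n + 1, n ^ 2) := by
    simp only [Prod.smul_mk, Prod.mk_add_mk, smul_eq_mul, Prod.mk.injEq]
    constructor <;> ring
  have hne : (1, 0) ≠ (n ^ 2 + n + 1, n ^ 2) :=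
    ne_of_apply_ne Prod.snd (by positivity : 0 < n ^ 2).ne
  have hR : IsHomog (n : ℤ) (-(n : ℤ) - 1) R := hR_eq ▸ isHomog_edgePoly hweight _ _
  have hG : IsHomog (n : ℤ) (-(n : ℤ) - 1) G := hG_eq ▸ isHomog_edgePoly hweight _ _
  have hst : IsSt (n : ℤ) (-(n : ℤ) - 1) R (1, 0) :=
    hR_eq ▸ isSt_edgePoly_X_add_one_pow hv hweight (1, 0) n
  have hen : IsEn (n : ℤ) (-(n : ℤ) - 1) R (n ^ 2 + n + 1, n ^ 2) :=
    hR_eq ▸ hend ▸ isEn_edgePoly_X_add_one_pow hv hweight (1, 0) n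
  have hGR : Jb G R = R ^ 2 := hR_eq ▸ hG_eq ▸ Jb_edgePoly_bracketCofactor hn
  have hgcd : Int.gcd n (-(n : ℤ) - 1) = 1 :=
    Int.isCoprime_iff_gcd_eq_one.1 ⟨-1, -1, by ring⟩
  have hposs : PossibleA0 K (n ^ 2 + n + 1, n ^ 2) :=
    possibleA0_of_isSt_of_isEn hgcd (by omega) (by lia) le_rfl hR hst hen hne (by simp)
      (by push_cast; nlinarith) one_le_two hG hGR
  exact ⟨hR, not_isMonomial_of_isSt_of_isEn hst hen hne, hst, hen, hGR, hposs, by push_cast; ring⟩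

end
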